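/- arXiv:1305.2618 — 3 statements merged into one kernel-verified Lean document; each statement's English description precedes it below -/
import Mathlib

section
/- Let Y be a closed subspace of C₀(ℝⁿ) consisting entirely of Fourier transforms of L¹(ℝⁿ) functions. Then there are positive constants α and C such that every F ∈ Y satisfies ‖F‖_∞ ≤ C · sup{|F(ξ)| : |ξ| ≤ α}. -/
open MeasureTheory ZeroAtInfty RealInnerProductSpace

/-- The Fourier transform of `f : ℝⁿ → ℂ`, `𝓕f(ξ) = ∫ e^{-i⟨x,ξ⟩} f(x) dx`. -/
noncomputable def fourierTransf {n : ℕ} (f : EuclideanSpace ℝ (Fin n) → ℂ)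
    (ξ : EuclideanSpace ℝ (Fin n)) : ℂ :=
  ∫ x : EuclideanSpace ℝ (Fin n), Complex.exp (-(Complex.I * (⟪x, ξ⟫ : ℝ))) * f x

theorem ft_inj {n : ℕ} (f : EuclideanSpace ℝ (Fin n) → ℂ) (hf : Integrable f)
    (h : ∀ ξ, fourierTransf f ξ = 0) : ∀ᵐ x, f x = 0 := by
  have h0 : ∀ w, FourierTransform.fourier f w = 0 := by
    intro w
    rw [← h ((2 * Real.pi) • w), Real.fourier_eq', fourierTransf]
    congr 1
    ext x
    rw [smul_eq_mul, inner_smul_right]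
    congr 2
    push_cast
    ring
  apply ae_eq_zero_of_integral_contDiff_smul_eq_zero hf.locallyIntegrable
  intro g g_smooth g_cpt
  have hg₁ : HasCompactSupport (Complex.ofRealCLM ∘ g) := g_cpt.comp_left rfl
  have hg₂ : ContDiff ℝ (⊤ : ℕ∞) (Complex.ofRealCLM ∘ g) := by fun_prop
  let G := hg₁.toSchwartzMap hg₂
  let H := FourierTransformInv.fourierInv G
  have hH : FourierTransform.fourier (H : EuclideanSpace ℝ (Fin n) → ℂ) = G := by
    rw [← SchwartzMap.fourier_coe]
    simp [H]
  have key : ∫ ξ, (FourierTransform.fourier f ξ) • H ξ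
      = ∫ x, f x • FourierTransform.fourier (H : EuclideanSpace ℝ (Fin n) → ℂ) x := by
    simpa using! (VectorFourier.integral_fourierIntegral_smul_eq_flip
      (L := innerₗ (EuclideanSpace ℝ (Fin n)))
      Real.continuous_fourierChar continuous_inner hf H.integrable)
  rw [hH] at key
  simp only [h0, zero_smul, integral_zero] at key
  rw [key]
  congr 1
  ext x
  simp [G, mul_comm]

/-- Average of `φ` over all sign sums of the list, started at `x`. -/
noncomputable def signAvg {E : Type*} [AddCommGroup E] (φ : E → ℝ) : List E → E → ℝ
  | [], x => φ x
  | a :: l, x => (signAvg φ l (x + a) + signAvg φ l (x - a)) / 2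

theorem signAvg_mono {E : Type*} [AddCommGroup E] {φ ψ : E → ℝ} (h : ∀ x, φ x ≤ ψ x) :
    ∀ (l : List E) (x : E), signAvg φ l x ≤ signAvg ψ l x
  | [], x => h x
  | a :: l, x => by
    have h1 := signAvg_mono h l (x + a)
    have h2 := signAvg_mono h l (x - a)
    simp only [signAvg]
    linarith

theorem signAvg_comp {E F : Type*} [AddCommGroup E] [AddCommGroup F] (S : E →+ F) (φ : F → ℝ) :
    ∀ (l : List E) (x : E), signAvg (fun y => φ (S y)) l x = signAvg φ (l.map S) (S x)
  | [], x => rfl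
  | a :: l, x => by
    simp only [signAvg, List.map_cons, signAvg_comp S φ l, map_add, map_sub]

theorem signAvg_lin {E : Type*} [AddCommGroup E] (φ ψ : E → ℝ) (a b : ℝ) :
    ∀ (l : List E) (x : E), signAvg (fun y => a * φ y - b * ψ y) l x
      = a * signAvg φ l x - b * signAvg ψ l x
  | [], x => rfl
  | c :: l, x => by
    simp only [signAvg, signAvg_lin φ ψ a b l]
    ring

theorem signAvg_mul {E : Type*} [AddCommGroup E] (φ : E → ℝ) (a : ℝ) :
    ∀ (l : List E) (x : E), signAvg (fun y => a * φ y) l x = a * signAvg φ l x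
  | [], x => rfl
  | c :: l, x => by
    simp only [signAvg, signAvg_mul φ a l]
    ring

theorem signAvg_sq : ∀ (l : List ℂ) (x : ℂ),
    signAvg (fun y => ‖y‖ ^ 2) l x = ‖x‖ ^ 2 + (l.map (fun a => ‖a‖ ^ 2)).sum
  | [], x => by simp [signAvg]
  | a :: l, x => by
    simp only [signAvg, signAvg_sq l, List.map_cons, List.sum_cons]
    have := parallelogram_law_with_norm ℝ x a
    nlinarith

theorem sumsq_nonneg (l : List ℂ) : 0 ≤ (l.map (fun a => ‖a‖ ^ 2)).sum := by
  apply List.sum_nonneg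
  intro y hy
  obtain ⟨a, -, rfl⟩ := List.mem_map.1 hy
  positivity

theorem signAvg_four : ∀ (l : List ℂ) (x : ℂ),
    signAvg (fun y => ‖y‖ ^ 4) l x ≤ ‖x‖ ^ 4 + 6 * ‖x‖ ^ 2 * (l.map (fun a => ‖a‖ ^ 2)).sum
      + 3 * (l.map (fun a => ‖a‖ ^ 2)).sum ^ 2
  | [], x => by simp [signAvg]
  | a :: l, x => by
    have h1 := signAvg_four l (x + a)
    have h2 := signAvg_four l (x - a)
    have h0 := sumsq_nonneg l
    simp only [signAvg, List.map_cons, List.sum_cons]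
    set σ := (l.map (fun a => ‖a‖ ^ 2)).sum
    have e1 := norm_add_sq_real x a
    have e2 := norm_sub_sq_real x a
    have cs := abs_real_inner_le_norm x a
    set t := inner ℝ x a
    have ct : t ^ 2 ≤ ‖x‖ ^ 2 * ‖a‖ ^ 2 := by
      rw [← mul_pow]; exact sq_le_sq' (by linarith [neg_le_of_abs_le cs]) (le_of_abs_le cs)
    have f1 : ‖x + a‖ ^ 4 = (‖x‖ ^ 2 + 2 * t + ‖a‖ ^ 2) ^ 2 := by rw [← e1]; ring
    have f2 : ‖x - a‖ ^ 4 = (‖x‖ ^ 2 - 2 * t + ‖a‖ ^ 2) ^ 2 := by rw [← e2]; ring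
    rw [f1, e1] at h1
    rw [f2, e2] at h2
    have : 0 ≤ ‖a‖ ^ 4 := by positivity
    nlinarith

theorem khinchine (l : List ℂ) :
    (1 / 2) * (l.map (fun a => ‖a‖)).sum ≤ √(l.length) * signAvg (fun y => ‖y‖) l 0 := by
  have hσ := sumsq_nonneg l
  have h2 := signAvg_sq l 0
  have h4 := signAvg_four l 0
  have hcs : (l.map (fun a => ‖a‖)).sum ^ 2 ≤ l.length * (l.map (fun a => ‖a‖ ^ 2)).sum := by
    have : ∀ l : List ℂ, (l.map (fun a => ‖a‖)).sum ^ 2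
        ≤ l.length * (l.map (fun a => ‖a‖ ^ 2)).sum := by
      intro l
      have := sq_sum_le_card_mul_sum_sq (s := (Finset.univ : Finset (Fin l.length)))
        (f := fun i => ‖l[i]‖)
      simpa [Fin.sum_univ_fun_getElem l (fun a => ‖a‖),
        Fin.sum_univ_fun_getElem l (fun a => ‖a‖ ^ 2)] using this
    exact this l
  set σ := (l.map (fun a => ‖a‖ ^ 2)).sum
  set A := signAvg (fun y : ℂ => ‖y‖) l 0
  simp only [norm_zero, ne_eq, OfNat.ofNat_ne_zero, not_false_eq_true, zero_pow, zero_add,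
    mul_zero, zero_mul] at h2 h4
  have hs : √2 ^ 2 = 2 := Real.sq_sqrt (by norm_num)
  have hA : √σ ≤ 2 * A := by
    rcases hσ.eq_or_lt with h | h
    · rw [← h, Real.sqrt_zero]
      have : signAvg (fun y : ℂ => 0 * ‖y‖) l 0 ≤ A :=
        signAvg_mono (fun x => by simp) l 0
      rw [signAvg_mul] at this
      linarith
    · set s := √(2 * σ) with hsdef
      have hs0 : 0 < s := Real.sqrt_pos.2 (by linarith)
      have hs2 : s ^ 2 = 2 * σ := Real.sq_sqrt (by linarith)
      have hp : ∀ x : ℂ, (3 / 2 * s ^ 2) * ‖x‖ ^ 2 - (1 / 2) * ‖x‖ ^ 4 ≤ s ^ 3 * ‖x‖ := by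
        intro x
        have hx := norm_nonneg x
        have : 0 ≤ ‖x‖ * ((‖x‖ - s) ^ 2 * (‖x‖ + 2 * s)) := by positivity
        nlinarith
      have h5 := signAvg_mono hp l 0
      rw [signAvg_lin, signAvg_mul, h2] at h5
      -- s^3 A ≥ 3 σ^2 - 3/2 σ^2 = 3/2 σ^2
      have h6 : 3 / 2 * σ ^ 2 ≤ s ^ 3 * A := by nlinarith
      have h7 : 3 / 4 * s ≤ 2 * A := by
        have : s ^ 3 * (3 / 8 * s) ≤ s ^ 3 * A := by nlinarith
        have := le_of_mul_le_mul_left this (by positivity)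
        linarith
      have h8 : √σ ≤ 3 / 4 * s := by
        rw [Real.sqrt_le_left (by positivity)]
        nlinarith
      linarith
  have h9 : (l.map (fun a => ‖a‖)).sum ≤ √(l.length) * √σ := by
    rw [← Real.sqrt_mul (by positivity)]
    exact Real.le_sqrt_of_sq_le hcs
  have := mul_le_mul_of_nonneg_left hA (Real.sqrt_nonneg (l.length : ℝ))
  linarith

theorem signAvg_L1 {Ω : Type*} [MeasurableSpace Ω] {μ : Measure Ω} :
    ∀ (l : List (Lp ℂ 1 μ)) (f : Lp ℂ 1 μ),
      Integrable (fun x => signAvg (fun y : ℂ => ‖y‖) (l.map (fun g => g x)) (f x)) μ ∧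
      ∫ x, signAvg (fun y : ℂ => ‖y‖) (l.map (fun g => g x)) (f x) ∂μ
        = signAvg (fun g => ‖g‖) l f
  | [], f => by
    simp only [signAvg, List.map_nil]
    exact ⟨(L1.integrable_coeFn f).norm, (L1.norm_eq_integral_norm f).symm⟩
  | a :: l, f => by
    obtain ⟨i1, e1⟩ := signAvg_L1 l (f + a)
    obtain ⟨i2, e2⟩ := signAvg_L1 l (f - a)
    have c1 : (fun x => signAvg (fun y : ℂ => ‖y‖) (l.map (fun g => g x)) ((f + a) x))
        =ᵐ[μ] (fun x => signAvg (fun y : ℂ => ‖y‖) (l.map (fun g => g x)) (f x + a x)) := by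
      filter_upwards [Lp.coeFn_add f a] with x hx
      rw [hx]; rfl
    have c2 : (fun x => signAvg (fun y : ℂ => ‖y‖) (l.map (fun g => g x)) ((f - a) x))
        =ᵐ[μ] (fun x => signAvg (fun y : ℂ => ‖y‖) (l.map (fun g => g x)) (f x - a x)) := by
      filter_upwards [Lp.coeFn_sub f a] with x hx
      rw [hx]; rfl
    rw [integral_congr_ae c1] at e1
    rw [integral_congr_ae c2] at e2
    have j1 := i1.congr c1
    have j2 := i2.congr c2
    simp only [signAvg, List.map_cons]
    refine ⟨(j1.add j2).div_const 2, ?_⟩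
    rw [integral_div, integral_add j1 j2, e1, e2]

theorem sum_L1 {Ω : Type*} [MeasurableSpace Ω] {μ : Measure Ω} :
    ∀ (l : List (Lp ℂ 1 μ)),
      Integrable (fun x => ((l.map (fun g => g x)).map (fun a => ‖a‖)).sum) μ ∧
      ∫ x, ((l.map (fun g => g x)).map (fun a => ‖a‖)).sum ∂μ = (l.map (fun g => ‖g‖)).sum
  | [] => by simp
  | a :: l => by
    obtain ⟨i, e⟩ := sum_L1 l
    have j := (L1.integrable_coeFn a).norm
    simp only [List.map_cons, List.sum_cons]
    refine ⟨j.add i, ?_⟩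
    rw [integral_add j i, e, L1.norm_eq_integral_norm]

theorem khinchine_L1 {Ω : Type*} [MeasurableSpace Ω] {μ : Measure Ω} (l : List (Lp ℂ 1 μ)) :
    (1 / 2) * (l.map (fun g => ‖g‖)).sum ≤ √(l.length) * signAvg (fun g => ‖g‖) l 0 := by
  obtain ⟨i1, e1⟩ := signAvg_L1 l 0
  obtain ⟨i2, e2⟩ := sum_L1 l
  rw [← e1, ← e2, ← integral_const_mul, ← integral_const_mul]
  apply integral_mono_ae (i2.const_mul _) (i1.const_mul _)
  filter_upwards [Lp.coeFn_zero ℂ 1 μ] with x hx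
  have := khinchine (l.map (fun g => g x))
  rw [List.length_map] at this
  simp only [hx]
  exact this

theorem C0_norm_le {n : ℕ} (F : C₀(EuclideanSpace ℝ (Fin n), ℂ)) {B : ℝ}
    (h : ∀ ξ, ‖F ξ‖ ≤ B) : ‖F‖ ≤ B := by
  rw [← ZeroAtInftyContinuousMap.norm_toBCF_eq_norm]
  exact (BoundedContinuousFunction.norm_le_of_nonempty).2 h

theorem C0_le_norm {n : ℕ} (F : C₀(EuclideanSpace ℝ (Fin n), ℂ)) (ξ) : ‖F ξ‖ ≤ ‖F‖ :=
  F.toBCF.norm_coe_le_norm ξ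

theorem signAvg_C0 {n : ℕ} (B : ℝ) : ∀ (l : List C₀(EuclideanSpace ℝ (Fin n), ℂ))
    (F : C₀(EuclideanSpace ℝ (Fin n), ℂ)),
    (∀ ξ, ‖F ξ‖ + (l.map (fun G => ‖G ξ‖)).sum ≤ B) → signAvg (fun G => ‖G‖) l F ≤ B
  | [], F, h => C0_norm_le F (by simpa using h)
  | a :: l, F, h => by
    simp only [List.map_cons, List.sum_cons] at h
    have h1 := signAvg_C0 B l (F + a) (fun ξ => by
      have := norm_add_le (F ξ) (a ξ)
      have := h ξ
      simp only [ZeroAtInftyContinuousMap.add_apply]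
      linarith)
    have h2 := signAvg_C0 B l (F - a) (fun ξ => by
      have := norm_sub_le (F ξ) (a ξ)
      have := h ξ
      simp only [ZeroAtInftyContinuousMap.sub_apply]
      linarith)
    simp only [signAvg]
    linarith

theorem glide {n : ℕ} (Y : Submodule ℂ C₀(EuclideanSpace ℝ (Fin n), ℂ)) {ε : ℝ} (hε : 0 < ε)
    (h : ∀ α > (0 : ℝ), ∃ F ∈ Y, ‖F‖ = 1 ∧ ∀ ξ, ‖ξ‖ ≤ α → ‖F ξ‖ ≤ ε) (N : ℕ) :
    ∃ l : List Y, l.length = N ∧ (∀ F ∈ l, ‖F‖ = 1) ∧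
      ∀ ξ, (l.map (fun F => ‖F.1 ξ‖)).sum ≤ 1 + N * ε := by
  induction N with
  | zero =>
    refine ⟨[], rfl, fun F hF => absurd hF List.not_mem_nil, fun ξ => ?_⟩
    rw [List.map_nil, List.sum_nil]
    norm_num
  | succ N ih =>
    obtain ⟨l, hl, h1, hs⟩ := ih
    have ht : ∀ l : List Y, Filter.Tendsto (fun ξ => (l.map (fun F => ‖F.1 ξ‖)).sum)
        (Filter.cocompact _) (nhds 0) := by
      intro l
      induction l with
      | nil => exact tendsto_const_nhds
      | cons a l ih =>
        simp only [List.map_cons, List.sum_cons]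
        have := (ZeroAtInftyContinuousMap.zero_at_infty' a.1).norm
        simpa using this.add ih
    have he := (ht l).eventually (gt_mem_nhds hε)
    rw [← Metric.cobounded_eq_cocompact] at he
    obtain ⟨α, hα⟩ : ∃ α : ℝ, ∀ ξ : EuclideanSpace ℝ (Fin n), α < ‖ξ‖ →
        (l.map (fun F => ‖F.1 ξ‖)).sum < ε := by
      have := (Filter.hasBasis_cobounded_norm (E := EuclideanSpace ℝ (Fin n))).eventually_iff.1 he
      obtain ⟨r, -, hr⟩ := this
      exact ⟨r, fun ξ hξ => hr hξ.le⟩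
    obtain ⟨F, hF, hF1, hFs⟩ := h (max α 1) (by positivity)
    refine ⟨⟨F, hF⟩ :: l, by simp [hl], ?_, ?_⟩
    · intro G hG
      rcases List.mem_cons.1 hG with rfl | hG
      · exact hF1
      · exact h1 G hG
    · intro ξ
      simp only [List.map_cons, List.sum_cons]
      push_cast
      rcases le_or_gt ‖ξ‖ (max α 1) with hx | hx
      · have := hFs ξ hx
        have := hs ξ
        linarith
      · have := hα ξ (lt_of_le_of_lt (le_max_left _ _) hx)
        have := C0_le_norm F ξ
        have : 0 ≤ N * ε := by positivity
        linarith

theorem ft_integrable {n : ℕ} {f : EuclideanSpace ℝ (Fin n) → ℂ} (hf : Integrable f)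
    (ξ : EuclideanSpace ℝ (Fin n)) :
    Integrable (fun x => Complex.exp (-(Complex.I * (⟪x, ξ⟫ : ℝ))) * f x) := by
  refine hf.bdd_mul (c := 1) (by fun_prop) (Filter.Eventually.of_forall fun x => ?_)
  have : -(Complex.I * ((⟪x, ξ⟫ : ℝ) : ℂ)) = ((-⟪x, ξ⟫ : ℝ) : ℂ) * Complex.I := by
    push_cast; ring
  rw [this, Complex.norm_exp_ofReal_mul_I]

theorem ft_norm_le {n : ℕ} (f : EuclideanSpace ℝ (Fin n) → ℂ)
    (ξ : EuclideanSpace ℝ (Fin n)) : ‖fourierTransf f ξ‖ ≤ ∫ x, ‖f x‖ := by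
  refine (norm_integral_le_integral_norm _).trans_eq ?_
  congr 1
  ext x
  have : -(Complex.I * ((⟪x, ξ⟫ : ℝ) : ℂ)) = ((-⟪x, ξ⟫ : ℝ) : ℂ) * Complex.I := by
    push_cast; ring
  rw [norm_mul, this, Complex.norm_exp_ofReal_mul_I, one_mul]

theorem ft_congr {n : ℕ} {f g : EuclideanSpace ℝ (Fin n) → ℂ} (h : f =ᵐ[volume] g)
    (ξ : EuclideanSpace ℝ (Fin n)) : fourierTransf f ξ = fourierTransf g ξ := by
  apply integral_congr_ae
  filter_upwards [h] with x hx
  rw [hx]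

/-- The Fourier transform at a point, as a linear map on `L¹`. -/
noncomputable def ftL {n : ℕ} (ξ : EuclideanSpace ℝ (Fin n)) :
    Lp ℂ 1 (volume : Measure (EuclideanSpace ℝ (Fin n))) →ₗ[ℂ] ℂ where
  toFun f := fourierTransf f ξ
  map_add' f g := by
    rw [ft_congr (Lp.coeFn_add f g)]
    simp only [fourierTransf, Pi.add_apply, mul_add]
    exact integral_add (ft_integrable (L1.integrable_coeFn f) ξ)
      (ft_integrable (L1.integrable_coeFn g) ξ)
  map_smul' c f := by
    rw [ft_congr (Lp.coeFn_smul c f)]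
    simp only [fourierTransf, Pi.smul_apply, smul_eq_mul, RingHom.id_apply]
    rw [← integral_const_mul]
    congr 1
    ext x
    ring

theorem ftL_norm_le {n : ℕ} (ξ : EuclideanSpace ℝ (Fin n))
    (f : Lp ℂ 1 (volume : Measure (EuclideanSpace ℝ (Fin n)))) : ‖ftL ξ f‖ ≤ ‖f‖ := by
  rw [L1.norm_eq_integral_norm]
  exact ft_norm_le _ _

theorem ftL_inj {n : ℕ} {f g : Lp ℂ 1 (volume : Measure (EuclideanSpace ℝ (Fin n)))}
    (h : ∀ ξ, ftL ξ f = ftL ξ g) : f = g := by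
  rw [← sub_eq_zero, Lp.eq_zero_iff_ae_eq_zero]
  apply ft_inj _ (L1.integrable_coeFn _)
  intro ξ
  change ftL ξ (f - g) = 0
  rw [map_sub, h, sub_self]

theorem closed_graph_bound {E F : Type*} [NormedAddCommGroup E] [NormedSpace ℂ E] [CompleteSpace E]
    [NormedAddCommGroup F] [NormedSpace ℂ F] [CompleteSpace F] (Y : Submodule ℂ E)
    (hclosed : IsClosed (Y : Set E)) (s : Y → F)
    (hadd : ∀ x y, s (x + y) = s x + s y) (hsmul : ∀ (c : ℂ) x, s (c • x) = c • s x)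
    (hg : ∀ (u : ℕ → Y) (x : Y) (y : F), Filter.Tendsto (fun k => (u k : E)) Filter.atTop (nhds (x : E)) →
      Filter.Tendsto (fun k => s (u k)) Filter.atTop (nhds y) → y = s x) :
    ∃ K : ℝ, 0 ≤ K ∧ ∀ y, ‖s y‖ ≤ K * ‖(y : E)‖ := by
  have : CompleteSpace Y := hclosed.completeSpace_coe
  let S : Y →ₗ[ℂ] F := { toFun := s, map_add' := hadd, map_smul' := hsmul }
  have hS : Continuous S := by
    apply S.continuous_of_seq_closed_graph
    intro u x y hu hy
    exact hg u x y ((continuous_subtype_val.tendsto x).comp hu) hy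
  let T : Y →L[ℂ] F := ⟨S, hS⟩
  exact ⟨‖T‖, T.opNorm_nonneg, fun y => T.le_opNorm y⟩

theorem exists_bdd_inverse {n : ℕ}
    (Y : Submodule ℂ C₀(EuclideanSpace ℝ (Fin n), ℂ))
    (hclosed : IsClosed (Y : Set C₀(EuclideanSpace ℝ (Fin n), ℂ)))
    (hsub : ∀ F ∈ Y, ∃ f : EuclideanSpace ℝ (Fin n) → ℂ,
      Integrable f ∧ ∀ ξ, F ξ = fourierTransf f ξ) :
    ∃ (S : Y →+ Lp ℂ 1 (volume : Measure (EuclideanSpace ℝ (Fin n)))) (K : ℝ), 0 ≤ K ∧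
      (∀ F : Y, ‖S F‖ ≤ K * ‖F.1‖) ∧ ∀ (F : Y) ξ, F.1 ξ = ftL ξ (S F) := by
  have h1 : ∀ F : Y, ∃ f : Lp ℂ 1 (volume : Measure (EuclideanSpace ℝ (Fin n))),
      ∀ ξ, F.1 ξ = ftL ξ f := by
    intro F
    obtain ⟨f, hf, hF⟩ := hsub F.1 F.2
    refine ⟨hf.toL1 f, fun ξ => ?_⟩
    rw [hF ξ]
    exact (ft_congr hf.coeFn_toL1 ξ).symm
  choose s hs using h1
  have hadd : ∀ F G, s (F + G) = s F + s G := fun F G => ftL_inj fun ξ => by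
    rw [map_add, ← hs, ← hs, ← hs]; rfl
  have hsmul : ∀ (c : ℂ) F, s (c • F) = c • s F := fun c F => ftL_inj fun ξ => by
    rw [map_smul, ← hs, ← hs]; rfl
  obtain ⟨K, hK0, hK⟩ := closed_graph_bound Y hclosed s hadd hsmul (by
    intro u x y hu hy
    apply ftL_inj
    intro ξ
    have t1 : Filter.Tendsto (fun k => ftL ξ (s (u k))) Filter.atTop (nhds (ftL ξ y)) := by
      have hc : Continuous (ftL (n := n) ξ) :=
        (LinearMap.mkContinuous (ftL ξ) 1 (fun f => by
          rw [one_mul]; exact ftL_norm_le ξ f)).continuous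
      exact (hc.tendsto y).comp hy
    have t2 : Filter.Tendsto (fun k => ftL ξ (s (u k))) Filter.atTop (nhds (ftL ξ (s x))) := by
      simp only [← hs]
      exact (ZeroAtInftyContinuousMap.tendsto_iff_tendstoUniformly.1 hu).tendsto_at ξ
    exact tendsto_nhds_unique t1 t2)
  exact ⟨AddMonoidHom.mk' s hadd, K, hK0, hK, hs⟩

theorem norm_le_ball_core {n : ℕ}
    (Y : Submodule ℂ C₀(EuclideanSpace ℝ (Fin n), ℂ))
    (hclosed : IsClosed (Y : Set C₀(EuclideanSpace ℝ (Fin n), ℂ)))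
    (hsub : ∀ F ∈ Y, ∃ f : EuclideanSpace ℝ (Fin n) → ℂ,
      Integrable f ∧ ∀ ξ, F ξ = fourierTransf f ξ) :
    ∃ α > (0 : ℝ), ∃ C > (0 : ℝ), ∀ F ∈ Y,
      ‖F‖ ≤ C * ⨆ ξ : Metric.closedBall (0 : EuclideanSpace ℝ (Fin n)) α, ‖F ↑ξ‖ := by
  obtain ⟨S, K, hK0, hK, hS⟩ := exists_bdd_inverse Y hclosed hsub
  by_contra hcon
  push Not at hcon
  have hn : ∀ ε > (0 : ℝ), ∀ α > (0 : ℝ), ∃ F ∈ Y, ‖F‖ = 1 ∧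
      ∀ ξ, ‖ξ‖ ≤ α → ‖F ξ‖ ≤ ε := by
    intro ε hε α hα
    obtain ⟨F, hF, hlt⟩ := hcon α hα ε⁻¹ (inv_pos.2 hε)
    have hb : BddAbove (Set.range fun ξ : Metric.closedBall (0 : EuclideanSpace ℝ (Fin n)) α =>
        ‖F ↑ξ‖) := ⟨‖F‖, by rintro _ ⟨ξ, rfl⟩; exact C0_le_norm F _⟩
    have hpos : 0 < ‖F‖ := by
      refine lt_of_le_of_lt ?_ hlt
      exact mul_nonneg (inv_pos.2 hε).le (Real.iSup_nonneg fun _ => norm_nonneg _)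
    refine ⟨((‖F‖⁻¹ : ℝ) : ℂ) • F, Y.smul_mem _ hF, ?_, fun ξ hξ => ?_⟩
    · rw [norm_smul, Complex.norm_real, norm_inv, norm_norm, inv_mul_cancel₀ hpos.ne']
    · have h1 := le_ciSup hb ⟨ξ, by simpa using hξ⟩
      rw [inv_mul_lt_iff₀ hε] at hlt
      rw [ZeroAtInftyContinuousMap.smul_apply, norm_smul, Complex.norm_real, norm_inv, norm_norm,
        inv_mul_le_iff₀ hpos, mul_comm]
      exact h1.trans hlt.le
  obtain ⟨N, hN⟩ := exists_nat_gt ((4 * K) ^ 2)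
  have hN0 : (0 : ℝ) < N := lt_of_le_of_lt (by positivity) hN
  obtain ⟨l, hl, h1, hs⟩ := glide Y (ε := (N : ℝ)⁻¹) (inv_pos.2 hN0) (hn _ (inv_pos.2 hN0)) N
  rw [mul_inv_cancel₀ hN0.ne'] at hs
  have k := khinchine_L1 (l.map S)
  rw [List.length_map, hl] at k
  have lower : (N : ℝ) ≤ ((l.map S).map (fun g => ‖g‖)).sum := by
    have : ∀ x ∈ (l.map S).map (fun g => ‖g‖), (1 : ℝ) ≤ x := by
      intro x hx
      simp only [List.map_map, List.mem_map, Function.comp] at hx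
      obtain ⟨F, hF, rfl⟩ := hx
      rw [← h1 F hF]
      apply C0_norm_le
      intro ξ
      change ‖F.1 ξ‖ ≤ _
      rw [hS]
      exact ftL_norm_le _ _
    have := List.card_nsmul_le_sum _ _ this
    simpa [hl] using this
  have e0 : signAvg (fun g => ‖g‖) (l.map S) 0 = signAvg (fun F : Y => ‖S F‖) l 0 := by
    have := signAvg_comp S (fun g => ‖g‖) l 0
    rw [map_zero] at this
    exact this.symm
  have e1 : signAvg (fun F : Y => ‖S F‖) l 0 ≤ K * signAvg (fun F : Y => ‖F‖) l 0 := by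
    rw [← signAvg_mul]
    exact signAvg_mono (fun F => hK F) l 0
  have e2 : signAvg (fun F : Y => ‖F‖) l 0 ≤ 2 := by
    have := signAvg_comp Y.subtype.toAddMonoidHom (fun g => ‖g‖) l 0
    refine this.trans_le ?_
    apply signAvg_C0
    intro ξ
    have := hs ξ
    rw [map_zero, List.map_map]
    simp only [ZeroAtInftyContinuousMap.zero_apply, norm_zero, zero_add]
    exact this.trans (by norm_num)
  have e3 : signAvg (fun g => ‖g‖) (l.map S) 0 ≤ K * 2 := by
    rw [e0]
    exact e1.trans (mul_le_mul_of_nonneg_left e2 hK0)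
  have e4 := mul_le_mul_of_nonneg_left e3 (Real.sqrt_nonneg (N : ℝ))
  have q : √(N : ℝ) * √(N : ℝ) = N := Real.mul_self_sqrt hN0.le
  have qp : 0 < √(N : ℝ) := Real.sqrt_pos.2 hN0
  have : √(N : ℝ) * √(N : ℝ) ≤ √(N : ℝ) * (4 * K) := by rw [q]; linarith
  have := le_of_mul_le_mul_left this qp
  have := pow_le_pow_left₀ qp.le this 2
  rw [Real.sq_sqrt hN0.le] at this
  linarith

/-- If `Y` is a closed subspace of `C₀(ℝⁿ)` consisting of absolutely
convergent Fourier transforms, then the sup norm on `Y` is controlled by the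
sup over a fixed ball. -/
theorem norm_le_ball_sup_of_fourier_range {n : ℕ}
    (Y : Subspace ℂ C₀(EuclideanSpace ℝ (Fin n), ℂ))
    (hclosed : IsClosed (Y : Set C₀(EuclideanSpace ℝ (Fin n), ℂ)))
    (hsub : ∀ F ∈ Y, ∃ f : EuclideanSpace ℝ (Fin n) → ℂ,
      Integrable f ∧ ∀ ξ, F ξ = fourierTransf f ξ) :
    ∃ α > (0 : ℝ), ∃ C > (0 : ℝ), ∀ F ∈ Y,
      ‖F‖ ≤ C * ⨆ ξ : Metric.closedBall (0 : EuclideanSpace ℝ (Fin n)) α, ‖F ↑ξ‖ := by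
  exact norm_le_ball_core Y hclosed hsub
end

section
/- Let Y be a closed subspace of c₀(ℤⁿ) all of whose elements are Fourier coefficient sequences of L¹(𝕋ⁿ) functions. Then there is a positive integer α and a constant C, independent of F ∈ Y, such that ‖F‖_∞ ≤ C · sup{|F(ξ)| : ξ ∈ ℤⁿ, |ξ| ≤ α}. -/
open MeasureTheory ZeroAtInfty

/-- The fundamental cube `[-π,π)ⁿ` for the torus `𝕋ⁿ`. -/
def torusCube (n : ℕ) : Set (EuclideanSpace ℝ (Fin n)) :=
  {x | ∀ k, x k ∈ Set.Ico (-Real.pi) Real.pi}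

/-- The `ξ`-th Fourier coefficient of a function on the torus `𝕋ⁿ`,
`𝓕f(ξ) = ∫_{𝕋ⁿ} e^{-i⟨x,ξ⟩} f(x) dx`. -/
noncomputable def torusFourierCoeff {n : ℕ} (f : EuclideanSpace ℝ (Fin n) → ℂ)
    (ξ : Fin n → ℤ) : ℂ :=
  ∫ x in torusCube n,
    Complex.exp (-(Complex.I * (∑ k, x k * (ξ k : ℝ) : ℝ))) * f x


/-- The quotient map from `ℝⁿ` to the unit torus (with period `2π`). -/
noncomputable def toTorus (n : ℕ) (x : EuclideanSpace ℝ (Fin n)) : UnitAddTorus (Fin n) :=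
  fun k => ((x k / (2 * Real.pi) : ℝ) : UnitAddCircle)

/-- The inverse of `toTorus` on the cube. -/
noncomputable def ofTorus (n : ℕ) (t : UnitAddTorus (Fin n)) : EuclideanSpace ℝ (Fin n) :=
  WithLp.toLp 2 fun k => 2 * Real.pi * (AddCircle.measurableEquivIco 1 (-(1 / 2)) (t k) : ℝ)

lemma measurable_toTorus (n : ℕ) : Measurable (toTorus n) := by
  unfold toTorus
  refine measurable_pi_lambda _ fun k => ?_
  refine AddCircle.measurable_mk'.comp ?_
  fun_prop

lemma measurable_ofTorus (n : ℕ) : Measurable (ofTorus n) := by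
  unfold ofTorus
  refine (WithLp.measurable_toLp 2 _).comp (measurable_pi_lambda _ fun k => ?_)
  refine Measurable.const_mul ?_ _
  exact measurable_subtype_coe.comp ((AddCircle.measurableEquivIco 1 (-(1 / 2))).measurable.comp
    (measurable_pi_apply k))

lemma ofTorus_toTorus {n : ℕ} {x : EuclideanSpace ℝ (Fin n)} (hx : x ∈ torusCube n) :
    ofTorus n (toTorus n x) = x := by
  ext k
  have h := hx k
  have hp := Real.pi_pos
  have : x k / (2 * Real.pi) ∈ Set.Ico (-(1 / 2) : ℝ) (-(1 / 2) + 1) := by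
    constructor
    · rw [le_div_iff₀ (by positivity)]; linarith [h.1]
    · rw [div_lt_iff₀ (by positivity)]; linarith [h.2]
  have e : ((AddCircle.measurableEquivIco 1 (-(1 / 2)) (toTorus n x k)) : ℝ)
      = x k / (2 * Real.pi) := AddCircle.equivIco_coe_of_mem this
  simp only [ofTorus, e]
  field_simp

lemma mFourier_toTorus {n : ℕ} (x : EuclideanSpace ℝ (Fin n)) (m : Fin n → ℤ) :
    UnitAddTorus.mFourier m (toTorus n x)
      = Complex.exp (-(Complex.I * (∑ k, x k * ((-m) k : ℝ) : ℝ))) := by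
  have hp : (Real.pi : ℂ) ≠ 0 := by exact_mod_cast Real.pi_ne_zero
  simp only [UnitAddTorus.mFourier, ContinuousMap.coe_mk, toTorus, fourier_coe_apply]
  rw [← Complex.exp_sum]
  congr 1
  push_cast
  rw [Finset.mul_sum, ← Finset.sum_neg_distrib]
  refine Finset.sum_congr rfl fun k _ => ?_
  field_simp
  simp [mul_comm]

lemma measurableSet_torusCube (n : ℕ) : MeasurableSet (torusCube n) := by
  have : torusCube n = ⋂ k, (fun x : EuclideanSpace ℝ (Fin n) => x k) ⁻¹'
      Set.Ico (-Real.pi) Real.pi := by ext; simp [torusCube]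
  rw [this]
  refine MeasurableSet.iInter fun k => ?_
  exact (by fun_prop : Measurable (fun x : EuclideanSpace ℝ (Fin n) => x k)) measurableSet_Ico

lemma integrable_mul_cont {n : ℕ} {f : EuclideanSpace ℝ (Fin n) → ℂ}
    (hf : IntegrableOn f (torusCube n)) (g : C(UnitAddTorus (Fin n), ℂ)) :
    IntegrableOn (fun x => g (toTorus n x) * f x) (torusCube n) := by
  refine Integrable.bdd_mul (c := ‖g‖) hf ?_ ?_
  · exact (g.continuous.measurable.comp (measurable_toTorus n)).aestronglyMeasurable
  · exact Filter.Eventually.of_forall fun x => g.norm_coe_le_norm _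

lemma integral_cont_eq_zero {n : ℕ} {f : EuclideanSpace ℝ (Fin n) → ℂ}
    (hf : IntegrableOn f (torusCube n)) (h0 : ∀ ξ, torusFourierCoeff f ξ = 0)
    (g : C(UnitAddTorus (Fin n), ℂ)) :
    ∫ x in torusCube n, g (toTorus n x) * f x = 0 := by
  let L : C(UnitAddTorus (Fin n), ℂ) →L[ℂ] ℂ := LinearMap.mkContinuous
    { toFun := fun g => ∫ x in torusCube n, g (toTorus n x) * f x
      map_add' := fun g h => by
        rw [← integral_add (integrable_mul_cont hf g) (integrable_mul_cont hf h)]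
        simp [add_mul]
      map_smul' := fun c g => by
        rw [RingHom.id_apply, smul_eq_mul, ← integral_const_mul]
        simp [mul_assoc] } (∫ x in torusCube n, ‖f x‖) (by
      intro g
      refine (norm_integral_le_integral_norm _).trans ?_
      rw [mul_comm, ← integral_const_mul]
      refine integral_mono (integrable_mul_cont hf g).norm (hf.norm.const_mul _) fun x => ?_
      simp only [norm_mul]
      gcongr
      exact g.norm_coe_le_norm _)
  have hle : (Submodule.span ℂ (Set.range (UnitAddTorus.mFourier (d := Fin n)))).topologicalClosure
      ≤ LinearMap.ker L.toLinearMap := by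
    refine Submodule.topologicalClosure_minimal _ ?_ L.isClosed_ker
    rw [Submodule.span_le]
    rintro _ ⟨m, rfl⟩
    have := h0 (-m)
    simp only [SetLike.mem_coe, LinearMap.mem_ker]
    change ∫ x in torusCube n, UnitAddTorus.mFourier m (toTorus n x) * f x = 0
    rw [← this]
    unfold torusFourierCoeff
    simp only [mFourier_toTorus]
  rw [UnitAddTorus.span_mFourier_closure_eq_top] at hle
  exact hle (Submodule.mem_top (x := g))

lemma fourier_unique {n : ℕ} {f : EuclideanSpace ℝ (Fin n) → ℂ}
    (hf : IntegrableOn f (torusCube n)) (h0 : ∀ ξ, torusFourierCoeff f ξ = 0) :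
    f =ᵐ[volume.restrict (torusCube n)] 0 := by
  set μ := volume.restrict (torusCube n) with hμ
  have hcube : ∀ᵐ x ∂μ, x ∈ torusCube n := ae_restrict_mem (measurableSet_torusCube n)
  -- replace by a strongly measurable representative
  have hf' : Integrable f μ := hf
  let F := hf'.1.mk f
  have hF : f =ᵐ[μ] F := hf'.1.ae_eq_mk
  have hFm : StronglyMeasurable F := hf'.1.stronglyMeasurable_mk
  have hπ := measurable_toTorus n
  let h : UnitAddTorus (Fin n) → ℂ := fun t => F (ofTorus n t)
  have hhm : StronglyMeasurable h := hFm.comp_measurable (measurable_ofTorus n)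
  have hcomp : (fun x => h (toTorus n x)) =ᵐ[μ] f := by
    filter_upwards [hcube, hF] with x hx hx2
    simp only [h, ofTorus_toTorus hx, hx2]
  have hint : Integrable h (μ.map (toTorus n)) := by
    rw [integrable_map_measure hhm.aestronglyMeasurable hπ.aemeasurable]
    exact hf'.congr hcomp.symm
  have hz : h =ᵐ[μ.map (toTorus n)] 0 := by
    refine ae_eq_zero_of_forall_setIntegral_isClosed_eq_zero hint fun K hK => ?_
    rw [← integral_indicator hK.measurableSet]
    have hlim : Filter.Tendsto (fun j : ℕ => ∫ t, ((hK.apprSeq j t : ℝ) : ℂ) * h t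
        ∂(μ.map (toTorus n))) Filter.atTop
        (nhds (∫ t, K.indicator h t ∂(μ.map (toTorus n)))) := by
      refine tendsto_integral_of_dominated_convergence (fun t => ‖h t‖) ?_ hint.norm ?_ ?_
      · intro j
        refine AEStronglyMeasurable.mul ?_ hhm.aestronglyMeasurable
        have : Continuous fun t => ((hK.apprSeq j t : ℝ) : ℂ) :=
          Complex.continuous_ofReal.comp (NNReal.continuous_coe.comp (hK.apprSeq j).continuous)
        exact this.measurable.aestronglyMeasurable
      · intro j
        refine Filter.Eventually.of_forall fun t => ?_
        rw [norm_mul]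
        refine mul_le_of_le_one_left (norm_nonneg _) ?_
        have := HasOuterApproxClosed.apprSeq_apply_le_one hK j t
        simpa using this
      · refine Filter.Eventually.of_forall fun t => ?_
        have h1 := (tendsto_pi_nhds.1 (HasOuterApproxClosed.tendsto_apprSeq hK)) t
        have h2 : Filter.Tendsto (fun j => ((hK.apprSeq j t : ℝ) : ℂ)) Filter.atTop
            (nhds (((K.indicator (fun _ => (1 : NNReal)) t : NNReal) : ℝ) : ℂ)) :=
          (Complex.continuous_ofReal.tendsto _).comp
            ((NNReal.continuous_coe.tendsto _).comp h1)
        have h3 := h2.mul_const (h t)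
        convert h3 using 2
        by_cases ht : t ∈ K <;> simp [ht]
    refine tendsto_nhds_unique hlim ?_
    refine tendsto_const_nhds.congr fun j => ?_
    symm
    let g : C(UnitAddTorus (Fin n), ℂ) := ⟨fun t => ((hK.apprSeq j t : ℝ) : ℂ),
      Complex.continuous_ofReal.comp (NNReal.continuous_coe.comp (hK.apprSeq j).continuous)⟩
    change ∫ t, (⇑g * h) t ∂(μ.map (toTorus n)) = 0
    rw [integral_map hπ.aemeasurable
      (g.continuous.measurable.aestronglyMeasurable.mul hhm.aestronglyMeasurable)]
    rw [← integral_cont_eq_zero hf h0 g]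
    refine integral_congr_ae ?_
    filter_upwards [hcomp] with x hx
    rw [Pi.mul_apply, hx]
  have := ae_of_ae_map hπ.aemeasurable hz
  filter_upwards [hcomp, this] with x h1 h2
  rw [← h1]; exact h2

/-- Average of `φ` over all signed sums `s ± a 0 ± ... ± a (N-1)`. -/
noncomputable def sgnAvg {E : Type*} [AddCommGroup E] (φ : E → ℝ) (a : ℕ → E) : ℕ → E → ℝ
  | 0, s => φ s
  | N + 1, s => (sgnAvg φ a N (s + a N) + sgnAvg φ a N (s - a N)) / 2

lemma sgnAvg_nonneg {E : Type*} [AddCommGroup E] (φ : E → ℝ) (hφ : ∀ x, 0 ≤ φ x) (a : ℕ → E)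
    (N : ℕ) : ∀ s, 0 ≤ sgnAvg φ a N s := by
  induction N with
  | zero => intro s; exact hφ s
  | succ N ih =>
    intro s
    simp only [sgnAvg]
    have := ih (s + a N)
    have := ih (s - a N)
    linarith

lemma sgnAvg_sq (a : ℕ → ℂ) (N : ℕ) : ∀ s, sgnAvg (fun z : ℂ => ‖z‖ ^ 2) a N s
    = ‖s‖ ^ 2 + ∑ j ∈ Finset.range N, ‖a j‖ ^ 2 := by
  induction N with
  | zero => intro s; simp [sgnAvg]
  | succ N ih =>
    intro s
    simp only [sgnAvg, ih, Finset.sum_range_succ]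
    have := parallelogram_law_with_norm ℝ s (a N)
    nlinarith

lemma sgnAvg_four (a : ℕ → ℂ) (N : ℕ) : ∀ s, sgnAvg (fun z : ℂ => ‖z‖ ^ 4) a N s
    ≤ ‖s‖ ^ 4 + 6 * ‖s‖ ^ 2 * (∑ j ∈ Finset.range N, ‖a j‖ ^ 2)
      + 3 * (∑ j ∈ Finset.range N, ‖a j‖ ^ 2) ^ 2 := by
  induction N with
  | zero => intro s; simp [sgnAvg]
  | succ N ih =>
    intro s
    simp only [sgnAvg, Finset.sum_range_succ]
    have h1 := ih (s + a N)
    have h2 := ih (s - a N)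
    set A := ∑ j ∈ Finset.range N, ‖a j‖ ^ 2
    have e1 : ‖s + a N‖ ^ 2 = ‖s‖ ^ 2 + 2 * inner ℝ s (a N) + ‖a N‖ ^ 2 :=
      norm_add_sq_real s (a N)
    have e2 : ‖s - a N‖ ^ 2 = ‖s‖ ^ 2 - 2 * inner ℝ s (a N) + ‖a N‖ ^ 2 :=
      norm_sub_sq_real s (a N)
    have e3 : (inner ℝ s (a N)) ^ 2 ≤ ‖s‖ ^ 2 * ‖a N‖ ^ 2 := by
      have := abs_real_inner_le_norm s (a N)
      rw [← mul_pow, ← sq_abs]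
      gcongr
    have f1 : ‖s + a N‖ ^ 4 = (‖s‖ ^ 2 + 2 * inner ℝ s (a N) + ‖a N‖ ^ 2) ^ 2 := by
      rw [← e1]; ring
    have f2 : ‖s - a N‖ ^ 4 = (‖s‖ ^ 2 - 2 * inner ℝ s (a N) + ‖a N‖ ^ 2) ^ 2 := by
      rw [← e2]; ring
    rw [f1, e1] at h1
    rw [f2, e2] at h2
    have : 0 ≤ (‖a N‖ ^ 2) ^ 2 := by positivity
    nlinarith

lemma sgnAvg_interp (a : ℕ → ℂ) (r : ℝ) (hr : 0 ≤ r) (N : ℕ) : ∀ s,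
    4 * r ^ 2 * sgnAvg (fun z : ℂ => ‖z‖ ^ 2) a N s - sgnAvg (fun z : ℂ => ‖z‖ ^ 4) a N s
      ≤ 4 * r ^ 3 * sgnAvg (fun z : ℂ => ‖z‖) a N s := by
  induction N with
  | zero =>
    intro s
    simp only [sgnAvg]
    have ht := norm_nonneg s
    set t := ‖s‖
    have : 0 ≤ 4 * r ^ 3 - 4 * t * r ^ 2 + t ^ 3 := by
      rcases le_total t r with h | h
      · have : 0 ≤ r ^ 2 * (r - t) := mul_nonneg (by positivity) (by linarith)
        have : 0 ≤ t ^ 3 := by positivity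
        nlinarith
      · obtain ⟨d, hd0⟩ := exists_add_of_le h
        rw [hd0]
        have hd : 0 ≤ d := by linarith
        have : 0 ≤ r * (r - d) ^ 2 + 2 * r * d ^ 2 + r ^ 2 * d + d ^ 3 := by positivity
        nlinarith
    nlinarith [mul_nonneg ht this]
  | succ N ih =>
    intro s
    simp only [sgnAvg]
    have := ih (s + a N)
    have := ih (s - a N)
    linarith

/-- A weak form of Khinchine's inequality. -/
lemma khinchine_s11 (a : ℕ → ℂ) (N : ℕ) :
    ∑ j ∈ Finset.range N, ‖a j‖ ≤ 4 * √N * sgnAvg (fun z : ℂ => ‖z‖) a N 0 := by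
  have h2 := sgnAvg_sq a N 0
  have h4 := sgnAvg_four a N 0
  have hn := sgnAvg_nonneg (fun z : ℂ => ‖z‖) (fun z => norm_nonneg z) a N 0
  set A := ∑ j ∈ Finset.range N, ‖a j‖ ^ 2 with hA
  have hA0 : 0 ≤ A := Finset.sum_nonneg fun _ _ => by positivity
  have hi := sgnAvg_interp a (√A) (Real.sqrt_nonneg _) N 0
  have hs : √A ^ 2 = A := Real.sq_sqrt hA0
  have cs : (∑ j ∈ Finset.range N, ‖a j‖) ^ 2 ≤ N * A := by
    simpa using sq_sum_le_card_mul_sum_sq (s := Finset.range N) (f := fun j => ‖a j‖)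
  have cs' : ∑ j ∈ Finset.range N, ‖a j‖ ≤ √N * √A := by
    rw [← Real.sqrt_mul (by positivity)]
    exact Real.le_sqrt_of_sq_le cs
  have key : √A ≤ 4 * sgnAvg (fun z : ℂ => ‖z‖) a N 0 := by
    set r := √A
    rw [← hs] at h2 h4
    simp at h2 h4
    rw [h2] at hi
    by_contra! hlt
    have hr : 0 < r := by linarith
    have : r ^ 3 * (4 * sgnAvg (fun z : ℂ => ‖z‖) a N 0) < r ^ 3 * r :=
      mul_lt_mul_of_pos_left hlt (by positivity)
    nlinarith
  calc _ ≤ _ := cs'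
    _ ≤ √N * (4 * sgnAvg (fun z : ℂ => ‖z‖) a N 0) := by gcongr
    _ = _ := by ring

lemma sgnAvg_integral {X : Type*} [MeasurableSpace X] (μ : Measure X) (a : ℕ → X → ℂ)
    (ha : ∀ j, Integrable (a j) μ) (N : ℕ) : ∀ s : X → ℂ, Integrable s μ →
    Integrable (fun x => sgnAvg (fun z : ℂ => ‖z‖) (fun j => a j x) N (s x)) μ ∧
    sgnAvg (fun h : X → ℂ => ∫ x, ‖h x‖ ∂μ) a N s
      = ∫ x, sgnAvg (fun z : ℂ => ‖z‖) (fun j => a j x) N (s x) ∂μ := by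
  induction N with
  | zero => intro s hs; exact ⟨hs.norm, rfl⟩
  | succ N ih =>
    intro s hs
    obtain ⟨i1, e1⟩ := ih (s + a N) (hs.add (ha N))
    obtain ⟨i2, e2⟩ := ih (s - a N) (hs.sub (ha N))
    simp only [sgnAvg]
    refine ⟨(i1.add i2).div_const 2, ?_⟩
    rw [e1, e2, integral_div, ← integral_add i1 i2]
    rfl

lemma khinchine_integral {X : Type*} [MeasurableSpace X] (μ : Measure X) (a : ℕ → X → ℂ)
    (ha : ∀ j, Integrable (a j) μ) (N : ℕ) :
    ∑ j ∈ Finset.range N, ∫ x, ‖a j x‖ ∂μ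
      ≤ 4 * √N * sgnAvg (fun h : X → ℂ => ∫ x, ‖h x‖ ∂μ) a N 0 := by
  obtain ⟨i, e⟩ := sgnAvg_integral μ a ha N 0 (integrable_zero _ _ _)
  rw [e, ← integral_const_mul, ← integral_finsetSum _ (fun j _ => (ha j).norm)]
  refine integral_mono (integrable_finsetSum _ (fun j _ => (ha j).norm)) (i.const_mul _) ?_
  intro x
  exact khinchine_s11 (fun j => a j x) N

/-- Lebesgue measure on the cube. -/
noncomputable abbrev cubeMeasure (n : ℕ) : Measure (EuclideanSpace ℝ (Fin n)) :=
  volume.restrict (torusCube n)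

lemma norm_char {n : ℕ} (x : EuclideanSpace ℝ (Fin n)) (ξ : Fin n → ℤ) :
    ‖Complex.exp (-(Complex.I * (∑ k, x k * (ξ k : ℝ) : ℝ)))‖ = 1 := by
  rw [Complex.norm_exp]
  simp only [Complex.neg_re, Complex.re_mul_ofReal, Complex.I_re, zero_mul, neg_zero, Real.exp_zero]

lemma integrable_char_mul {n : ℕ} {f : EuclideanSpace ℝ (Fin n) → ℂ}
    (hf : Integrable f (cubeMeasure n)) (ξ : Fin n → ℤ) :
    Integrable (fun x => Complex.exp (-(Complex.I * (∑ k, x k * (ξ k : ℝ) : ℝ))) * f x)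
      (cubeMeasure n) := by
  refine Integrable.bdd_mul (c := 1) hf ?_ ?_
  · refine Continuous.aestronglyMeasurable ?_
    fun_prop
  · exact Filter.Eventually.of_forall fun x => (norm_char x ξ).le

lemma tfc_congr {n : ℕ} {f g : EuclideanSpace ℝ (Fin n) → ℂ}
    (h : f =ᵐ[cubeMeasure n] g) (ξ : Fin n → ℤ) :
    torusFourierCoeff f ξ = torusFourierCoeff g ξ := by
  unfold torusFourierCoeff
  refine integral_congr_ae ?_
  filter_upwards [h] with x hx
  rw [hx]

lemma tfc_add {n : ℕ} {f g : EuclideanSpace ℝ (Fin n) → ℂ}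
    (hf : Integrable f (cubeMeasure n)) (hg : Integrable g (cubeMeasure n)) (ξ : Fin n → ℤ) :
    torusFourierCoeff (f + g) ξ = torusFourierCoeff f ξ + torusFourierCoeff g ξ := by
  unfold torusFourierCoeff
  rw [← integral_add (integrable_char_mul hf ξ) (integrable_char_mul hg ξ)]
  simp [mul_add]

lemma tfc_smul {n : ℕ} (c : ℂ) (f : EuclideanSpace ℝ (Fin n) → ℂ) (ξ : Fin n → ℤ) :
    torusFourierCoeff (c • f) ξ = c * torusFourierCoeff f ξ := by
  unfold torusFourierCoeff
  rw [← integral_const_mul]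
  simp [mul_left_comm]

lemma tfc_norm_le {n : ℕ} {f : EuclideanSpace ℝ (Fin n) → ℂ} (ξ : Fin n → ℤ) :
    ‖torusFourierCoeff f ξ‖ ≤ ∫ x, ‖f x‖ ∂(cubeMeasure n) := by
  unfold torusFourierCoeff
  refine (norm_integral_le_integral_norm _).trans (le_of_eq ?_)
  simp only [norm_mul, norm_char, one_mul]

/-- Fourier coefficient as a functional on `L¹`. -/
noncomputable def coeffL (n : ℕ) (ξ : Fin n → ℤ) : (Lp ℂ 1 (cubeMeasure n)) →L[ℂ] ℂ :=
  LinearMap.mkContinuous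
    { toFun := fun g => torusFourierCoeff (g : EuclideanSpace ℝ (Fin n) → ℂ) ξ
      map_add' := fun g h => by
        rw [tfc_congr (Lp.coeFn_add g h), tfc_add (L1.integrable_coeFn g) (L1.integrable_coeFn h)]
      map_smul' := fun c g => by
        rw [tfc_congr (Lp.coeFn_smul c g), tfc_smul]; rfl } 1 (by
      intro g
      rw [one_mul, L1.norm_eq_integral_norm]
      exact tfc_norm_le ξ)

lemma coeffL_apply {n : ℕ} (ξ : Fin n → ℤ) (g : Lp ℂ 1 (cubeMeasure n)) :
    coeffL n ξ g = torusFourierCoeff (g : EuclideanSpace ℝ (Fin n) → ℂ) ξ := rfl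

lemma coeffL_le {n : ℕ} (ξ : Fin n → ℤ) (g : Lp ℂ 1 (cubeMeasure n)) :
    ‖coeffL n ξ g‖ ≤ ‖g‖ := by
  rw [L1.norm_eq_integral_norm]
  exact tfc_norm_le ξ

lemma coeffL_inj {n : ℕ} {g h : Lp ℂ 1 (cubeMeasure n)}
    (H : ∀ ξ, coeffL n ξ g = coeffL n ξ h) : g = h := by
  rw [← sub_eq_zero]
  have h0 : ∀ ξ, torusFourierCoeff ((g - h : Lp ℂ 1 (cubeMeasure n)) :
      EuclideanSpace ℝ (Fin n) → ℂ) ξ = 0 := fun ξ => by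
    rw [← coeffL_apply, map_sub, H, sub_self]
  exact (Lp.eq_zero_iff_ae_eq_zero).2 (fourier_unique (L1.integrable_coeFn (g - h)) h0)

lemma c0_norm_le {n : ℕ} (F : C₀(Fin n → ℤ, ℂ)) {B : ℝ} (hB : 0 ≤ B) (h : ∀ ξ, ‖F ξ‖ ≤ B) :
    ‖F‖ ≤ B := by
  rw [← ZeroAtInftyContinuousMap.norm_toBCF_eq_norm]
  exact (BoundedContinuousFunction.norm_le hB).2 h

lemma c0_apply_le {n : ℕ} (F : C₀(Fin n → ℤ, ℂ)) (ξ : Fin n → ℤ) : ‖F ξ‖ ≤ ‖F‖ := by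
  rw [← ZeroAtInftyContinuousMap.norm_toBCF_eq_norm]
  exact F.toBCF.norm_coe_le_norm ξ

/-- The inverse Fourier transform is bounded on a Banach space of Fourier transforms. -/
lemma exists_inverse {n : ℕ} {E : Type*} [NormedAddCommGroup E] [NormedSpace ℂ E] [CompleteSpace E]
    (ev : E →ₗ[ℂ] ((Fin n → ℤ) → ℂ)) (hev : ∀ F ξ, ‖ev F ξ‖ ≤ ‖F‖)
    (hsub : ∀ F, ∃ f : EuclideanSpace ℝ (Fin n) → ℂ,
      IntegrableOn f (torusCube n) ∧ ∀ ξ, ev F ξ = torusFourierCoeff f ξ) :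
    ∃ S : E →L[ℂ] Lp ℂ 1 (cubeMeasure n), ∀ F ξ, coeffL n ξ (S F) = ev F ξ := by
  have hex : ∀ F : E, ∃ g : Lp ℂ 1 (cubeMeasure n), ∀ ξ, coeffL n ξ g = ev F ξ := by
    intro F
    obtain ⟨f, hf, h⟩ := hsub F
    have hf' : Integrable f (cubeMeasure n) := hf
    refine ⟨hf'.toL1 f, fun ξ => ?_⟩
    rw [coeffL_apply, h, tfc_congr hf'.coeFn_toL1]
  choose g hg using hex
  let T : E →ₗ[ℂ] Lp ℂ 1 (cubeMeasure n) :=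
    { toFun := g
      map_add' := fun F G => coeffL_inj fun ξ => by
        rw [map_add, hg, hg, hg, map_add]; rfl
      map_smul' := fun c F => coeffL_inj fun ξ => by
        rw [map_smul, hg, hg, map_smul]; rfl }
  have hT : Continuous T := by
    refine T.continuous_of_seq_closed_graph fun u x y hu hTu => ?_
    refine coeffL_inj fun ξ => ?_
    have h1 := ((coeffL n ξ).continuous.tendsto y).comp hTu
    have h2 : Filter.Tendsto (fun k => ev (u k) ξ) Filter.atTop (nhds (ev x ξ)) := by
      rw [tendsto_iff_norm_sub_tendsto_zero] at hu ⊢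
      refine squeeze_zero (fun _ => norm_nonneg _) (fun k => ?_) hu
      have := hev (u k - x) ξ
      rwa [map_sub] at this
    have h3 : (coeffL n ξ) (T x) = ev x ξ := hg x ξ
    rw [h3]
    refine tendsto_nhds_unique h1 (h2.congr fun k => ?_)
    exact (hg (u k) ξ).symm
  exact ⟨⟨T, hT⟩, hg⟩

lemma exists_box {n : ℕ} (G : (Fin n → ℤ) → ℝ)
    (hG : Filter.Tendsto G (Filter.cocompact _) (nhds 0)) {δ : ℝ} (hδ : 0 < δ) :
    ∃ α : ℕ, 0 < α ∧ ∀ ξ, ¬ (∀ k, |ξ k| ≤ (α : ℤ)) → G ξ ≤ δ := by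
  have h := hG.eventually (gt_mem_nhds hδ)
  rw [Filter.cocompact_eq_cofinite, Filter.eventually_cofinite] at h
  obtain ⟨M, hM⟩ := (h.image fun ξ => ∑ k, (ξ k).natAbs).bddAbove
  refine ⟨M + 1, by omega, fun ξ hξ => ?_⟩
  by_contra! hlt
  apply hξ
  intro k
  have h1 : ∑ k, (ξ k).natAbs ≤ M := hM ⟨ξ, by simpa using hlt.le, rfl⟩
  have h2 : (ξ k).natAbs ≤ ∑ k, (ξ k).natAbs :=
    Finset.single_le_sum (f := fun k => (ξ k).natAbs) (fun _ _ => Nat.zero_le _)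
      (Finset.mem_univ k)
  rw [Int.abs_eq_natAbs]
  omega

/-- Gliding hump. -/
lemma gliding {n : ℕ} {E : Type*} [NormedAddCommGroup E] [NormedSpace ℂ E]
    (ev : E →ₗ[ℂ] ((Fin n → ℤ) → ℂ)) (hev : ∀ F ξ, ‖ev F ξ‖ ≤ ‖F‖)
    (hev0 : ∀ F, Filter.Tendsto (ev F) (Filter.cocompact _) (nhds 0))
    (hY : ∀ α : ℕ, 0 < α → ∀ δ > (0 : ℝ), ∃ F : E, ‖F‖ = 1 ∧
      ∀ ξ : Fin n → ℤ, (∀ k, |ξ k| ≤ (α : ℤ)) → ‖ev F ξ‖ ≤ δ) (N : ℕ) :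
    ∃ F : ℕ → E, (∀ j < N, ‖F j‖ = 1) ∧ ∃ B : ℝ, 1 ≤ B ∧ B < 2 ∧
      ∀ ξ, ∑ j ∈ Finset.range N, ‖ev (F j) ξ‖ ≤ B := by
  induction N with
  | zero => exact ⟨0, by simp, 1, by norm_num, by norm_num, by simp⟩
  | succ N ih =>
    obtain ⟨F, hF, B, hB1, hB2, hB⟩ := ih
    have hδ : 0 < (2 - B) / 2 := by linarith
    obtain ⟨α, hα, hα2⟩ := exists_box
      (fun ξ => ∑ j ∈ Finset.range N, ‖ev (F j) ξ‖) (by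
        have := tendsto_finsetSum (Finset.range N) (fun j _ =>
          (hev0 (F j)).norm)
        simpa using this) hδ
    obtain ⟨G, hG1, hG⟩ := hY α hα _ hδ
    refine ⟨Function.update F N G, ?_, B + (2 - B) / 2, by linarith, by linarith, ?_⟩
    · intro j hj
      rcases eq_or_ne j N with rfl | h
      · simpa using hG1
      · rw [Function.update_of_ne h]; exact hF j (by omega)
    · intro ξ
      rw [Finset.sum_range_succ, Function.update_self]
      have e : ∑ j ∈ Finset.range N, ‖ev (Function.update F N G j) ξ‖
          = ∑ j ∈ Finset.range N, ‖ev (F j) ξ‖ := by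
        refine Finset.sum_congr rfl fun j hj => ?_
        rw [Function.update_of_ne (Finset.mem_range.1 hj).ne]
      rw [e]
      by_cases hξ : ∀ k, |ξ k| ≤ (α : ℤ)
      · linarith [hB ξ, hG ξ hξ]
      · have h1 := hα2 ξ hξ
        have h2 : ‖ev G ξ‖ ≤ 1 := by
          rw [← hG1]; exact hev _ ξ
        linarith

lemma sgnAvg_upper {n : ℕ} {E : Type*} [NormedAddCommGroup E] [NormedSpace ℂ E]
    (ev : E →ₗ[ℂ] ((Fin n → ℤ) → ℂ))
    (hev2 : ∀ F B, 0 ≤ B → (∀ ξ, ‖ev F ξ‖ ≤ B) → ‖F‖ ≤ B)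
    (S : E →L[ℂ] Lp ℂ 1 (cubeMeasure n)) (F : ℕ → E) {B : ℝ} (hB0 : 0 ≤ B) (N : ℕ) :
    ∀ (G : E) (s : EuclideanSpace ℝ (Fin n) → ℂ), s =ᵐ[cubeMeasure n] S G →
    (∀ ξ, ‖ev G ξ‖ + ∑ j ∈ Finset.range N, ‖ev (F j) ξ‖ ≤ B) →
    sgnAvg (fun h : EuclideanSpace ℝ (Fin n) → ℂ => ∫ x, ‖h x‖ ∂(cubeMeasure n))
      (fun j => (S (F j) : EuclideanSpace ℝ (Fin n) → ℂ)) N s ≤ ‖S‖ * B := by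
  induction N with
  | zero =>
    intro G s hs hB
    simp only [sgnAvg]
    have e : ∫ x, ‖s x‖ ∂(cubeMeasure n) = ‖S G‖ := by
      rw [L1.norm_eq_integral_norm]
      refine integral_congr_ae ?_
      filter_upwards [hs] with x hx
      rw [hx]
    rw [e]
    refine (S.le_opNorm G).trans ?_
    gcongr
    exact hev2 _ _ hB0 fun ξ => by simpa using hB ξ
  | succ N ih =>
    intro G s hs hB
    have h1 := ih (G + F N) (s + S (F N)) (by
      rw [map_add]
      exact (hs.add (Filter.EventuallyEq.refl _ _)).trans (Lp.coeFn_add _ _).symm) (fun ξ => by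
        have := hB ξ
        rw [Finset.sum_range_succ] at this
        have h2 := norm_add_le (ev G ξ) (ev (F N) ξ)
        rw [map_add]
        change ‖ev G ξ + ev (F N) ξ‖ + _ ≤ B
        linarith)
    have h2 := ih (G - F N) (s - S (F N)) (by
      rw [map_sub]
      exact (hs.sub (Filter.EventuallyEq.refl _ _)).trans (Lp.coeFn_sub _ _).symm) (fun ξ => by
        have := hB ξ
        rw [Finset.sum_range_succ] at this
        have h2 := norm_sub_le (ev G ξ) (ev (F N) ξ)
        rw [map_sub]
        change ‖ev G ξ - ev (F N) ξ‖ + _ ≤ B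
        linarith)
    simp only [sgnAvg]
    linarith

lemma abstract_main {n : ℕ} {E : Type*} [NormedAddCommGroup E] [NormedSpace ℂ E] [CompleteSpace E]
    (ev : E →ₗ[ℂ] ((Fin n → ℤ) → ℂ)) (hev : ∀ F ξ, ‖ev F ξ‖ ≤ ‖F‖)
    (hev2 : ∀ F B, 0 ≤ B → (∀ ξ, ‖ev F ξ‖ ≤ B) → ‖F‖ ≤ B)
    (hev0 : ∀ F, Filter.Tendsto (ev F) (Filter.cocompact _) (nhds 0))
    (hsub : ∀ F, ∃ f : EuclideanSpace ℝ (Fin n) → ℂ,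
      IntegrableOn f (torusCube n) ∧ ∀ ξ, ev F ξ = torusFourierCoeff f ξ) :
    ∃ α : ℕ, 0 < α ∧ ∃ C > (0 : ℝ), ∀ F,
      ‖F‖ ≤ C * ⨆ ξ : {ξ : Fin n → ℤ // ∀ k, |ξ k| ≤ (α : ℤ)}, ‖ev F ↑ξ‖ := by
  obtain ⟨S, hS⟩ := exists_inverse ev hev hsub
  by_contra hcon
  push Not at hcon
  have hY : ∀ α : ℕ, 0 < α → ∀ δ > (0 : ℝ), ∃ F : E, ‖F‖ = 1 ∧
      ∀ ξ : Fin n → ℤ, (∀ k, |ξ k| ≤ (α : ℤ)) → ‖ev F ξ‖ ≤ δ := by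
    intro α hα δ hδ
    obtain ⟨F, hF⟩ := hcon α hα δ⁻¹ (by positivity)
    have hle : ∀ ξ : Fin n → ℤ, (∀ k, |ξ k| ≤ (α : ℤ)) → ‖ev F ξ‖ ≤ δ * ‖F‖ := by
      intro ξ hξ
      have h1 := le_ciSup (f := fun ξ : {ξ : Fin n → ℤ // ∀ k, |ξ k| ≤ (α : ℤ)} => ‖ev F ↑ξ‖)
        ⟨‖F‖, by rintro _ ⟨ξ, rfl⟩; exact hev F _⟩ ⟨ξ, hξ⟩
      refine h1.trans ?_
      rw [inv_mul_lt_iff₀ hδ] at hF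
      exact hF.le
    have hpos : 0 < ‖F‖ := by
      refine lt_of_le_of_lt ?_ hF
      exact mul_nonneg (by positivity) (Real.iSup_nonneg fun _ => norm_nonneg _)
    refine ⟨((‖F‖⁻¹ : ℝ) : ℂ) • F, ?_, fun ξ hξ => ?_⟩
    · rw [norm_smul, Complex.norm_real, norm_inv, norm_norm]
      exact inv_mul_cancel₀ hpos.ne'
    · rw [map_smul, Pi.smul_apply, norm_smul, Complex.norm_real, norm_inv, norm_norm, inv_mul_le_iff₀ hpos, mul_comm]
      exact hle ξ hξ
  have main : ∀ N : ℕ, √N ≤ 8 * ‖S‖ := by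
    intro N
    obtain ⟨F, hF, B, hB1, hB2, hB⟩ := gliding ev hev hev0 hY N
    have hup := sgnAvg_upper ev hev2 S F (by norm_num : (0 : ℝ) ≤ 2) N 0 0
      (by rw [map_zero]; exact (Lp.coeFn_zero _ _ _).symm) (fun ξ => by
        have := hB ξ
        simp
        linarith)
    have hlow := khinchine_integral (cubeMeasure n)
      (fun j => (S (F j) : EuclideanSpace ℝ (Fin n) → ℂ)) (fun j => L1.integrable_coeFn _) N
    have hN : (N : ℝ) ≤ ∑ j ∈ Finset.range N, ∫ x, ‖(S (F j)) x‖ ∂(cubeMeasure n) := by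
      have : ∑ j ∈ Finset.range N, (1 : ℝ) ≤
          ∑ j ∈ Finset.range N, ∫ x, ‖(S (F j)) x‖ ∂(cubeMeasure n) := by
        refine Finset.sum_le_sum fun j hj => ?_
        rw [← L1.norm_eq_integral_norm, ← hF j (Finset.mem_range.1 hj)]
        refine hev2 _ _ (norm_nonneg _) fun ξ => ?_
        rw [← hS]
        exact coeffL_le ξ _
      simpa using this
    rcases Nat.eq_zero_or_pos N with rfl | hNpos
    · simp
    · have hs : 0 < √(N : ℝ) := Real.sqrt_pos.2 (by exact_mod_cast hNpos)
      have h1 : √(N : ℝ) * √(N : ℝ) ≤ √(N : ℝ) * (8 * ‖S‖) := by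
        rw [Real.mul_self_sqrt (by positivity)]
        calc (N : ℝ) ≤ _ := hN.trans hlow
          _ ≤ 4 * √(N : ℝ) * (‖S‖ * 2) := by gcongr
          _ = _ := by ring
      exact le_of_mul_le_mul_left h1 hs
  obtain ⟨N, hN⟩ := exists_nat_gt ((8 * ‖S‖) ^ 2)
  have h1 := Real.lt_sqrt_of_sq_lt hN
  exact absurd (main N) (not_le.2 h1)

/-- If `Y` is a closed subspace of `c₀(ℤⁿ)` consisting of Fourier coefficient
sequences of `L¹(𝕋ⁿ)` functions, then the sup norm on `Y` is controlled by the
sup over finitely many frequencies. -/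
theorem norm_le_finite_sup_of_torus_fourier_range {n : ℕ}
    (Y : Subspace ℂ C₀(Fin n → ℤ, ℂ))
    (hclosed : IsClosed (Y : Set C₀(Fin n → ℤ, ℂ)))
    (hsub : ∀ F ∈ Y, ∃ f : EuclideanSpace ℝ (Fin n) → ℂ,
      IntegrableOn f (torusCube n) ∧ ∀ ξ, F ξ = torusFourierCoeff f ξ) :
    ∃ α : ℕ, 0 < α ∧ ∃ C > (0 : ℝ), ∀ F ∈ Y,
      ‖F‖ ≤ C * ⨆ ξ : {ξ : Fin n → ℤ // ∀ k, |ξ k| ≤ (α : ℤ)}, ‖F ↑ξ‖ := by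

  let _ : NormedSpace ℂ Y :=
    { toModule := Y.module
      norm_smul_le := fun c F => norm_smul_le c (F : C₀(Fin n → ℤ, ℂ)) }
  have : CompleteSpace Y := hclosed.completeSpace_coe
  let ev : Y →ₗ[ℂ] ((Fin n → ℤ) → ℂ) :=
    { toFun := fun F ξ => (F : C₀(Fin n → ℤ, ℂ)) ξ
      map_add' := fun _ _ => rfl
      map_smul' := fun _ _ => rfl }
  obtain ⟨α, hα, C, hC, h⟩ := abstract_main (E := Y) ev (fun F ξ => c0_apply_le F.1 ξ)
    (fun F B hB h => c0_norm_le F.1 hB h)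
    (fun F => (F : C₀(Fin n → ℤ, ℂ)).zero_at_infty') (fun F : Y => hsub F.1 F.2)
  exact ⟨α, hα, C, hC, fun F hF => h ⟨F, hF⟩⟩
end

section
/- Let X be a subspace of L¹(μ) (μ a measure on a measurable space) and suppose there is a countable measurable partition (E_m) of the space and a constant C > 0 such that C‖f‖_{L¹} ≤ Σ_m |∫_{E_m} f dμ| for all f ∈ X. Then the map T : X → ℓ¹ given by (Tf)(m) = ∫_{E_m} f dμ is an isomorphism of X onto a subspace of ℓ¹; consequently, if X is also closed and infinite dimensional then X is not reflexive. -/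
open MeasureTheory NormedSpace

/-- A Banach space is reflexive if the canonical embedding into its bidual is
surjective. -/
def IsReflexiveSpace (W : Type*) [NormedAddCommGroup W] [NormedSpace ℂ W] : Prop :=
  Function.Surjective (inclusionInDoubleDual ℂ W)

theorem aux_hasSum_norm (y : lp (fun _ : ℕ => ℂ) 1) :
    HasSum (fun m => ‖(y : ∀ _ : ℕ, ℂ) m‖) ‖y‖ := by
  simpa using lp.hasSum_norm (p := 1) (by simp) y

/-- The functional on `ℓ¹` given by a bounded sequence. -/
theorem aux_functional (g : ℕ → ℂ) (hg : ∀ m, ‖g m‖ ≤ 1) :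
    ∃ φ : lp (fun _ : ℕ => ℂ) 1 →L[ℂ] ℂ,
      ∀ y : lp (fun _ : ℕ => ℂ) 1, HasSum (fun m => g m * (y : ∀ _ : ℕ, ℂ) m) (φ y) := by
  have hle : ∀ (y : lp (fun _ : ℕ => ℂ) 1) m,
      ‖g m * (y : ∀ _ : ℕ, ℂ) m‖ ≤ ‖(y : ∀ _ : ℕ, ℂ) m‖ := by
    intro y m
    rw [norm_mul]
    exact mul_le_of_le_one_left (norm_nonneg _) (hg m)
  have hs : ∀ y : lp (fun _ : ℕ => ℂ) 1, Summable (fun m => g m * (y : ∀ _ : ℕ, ℂ) m) :=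
    fun y => Summable.of_norm_bounded (aux_hasSum_norm y).summable (hle y)
  let L : lp (fun _ : ℕ => ℂ) 1 →ₗ[ℂ] ℂ :=
    { toFun := fun y => ∑' m, g m * (y : ∀ _ : ℕ, ℂ) m
      map_add' := by
        intro x y
        rw [← (hs x).tsum_add (hs y)]
        simp [mul_add]
      map_smul' := by
        intro c x
        rw [RingHom.id_apply, smul_eq_mul, ← tsum_mul_left]
        congr 1
        ext m
        simp
        ring }
  refine ⟨L.mkContinuous 1 ?_, fun y => (hs y).hasSum⟩
  intro y
  rw [one_mul]
  exact tsum_of_norm_bounded (aux_hasSum_norm y) (hle y)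

/-- In an infinite dimensional space bounded below in `ℓ¹` there are vectors vanishing on a
given initial segment. -/
theorem aux_exists {W : Type*} [NormedAddCommGroup W] [NormedSpace ℂ W]
    (T : W →L[ℂ] lp (fun _ : ℕ => ℂ) 1) (hT : Function.Injective T)
    (hinf : ¬ FiniteDimensional ℂ W) (N : ℕ) :
    ∃ (x : W) (M : ℕ), ‖T x‖ = 1 ∧ (∀ m < N, (T x : ∀ _ : ℕ, ℂ) m = 0) ∧ N < M ∧
      3 / 4 < ∑ m ∈ Finset.range M, ‖(T x : ∀ _ : ℕ, ℂ) m‖ := by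
  let R : W →ₗ[ℂ] (Fin N → ℂ) :=
    { toFun := fun x i => (T x : ∀ _ : ℕ, ℂ) i
      map_add' := by intro x y; ext i; simp
      map_smul' := by intro c x; ext i; simp }
  have hR : ¬ Function.Injective R := fun h => hinf (FiniteDimensional.of_injective R h)
  obtain ⟨x, hx, hx0⟩ : ∃ x, R x = 0 ∧ x ≠ 0 := by
    by_contra! h
    exact hR ((injective_iff_map_eq_zero R).2 h)
  have hTx : ‖T x‖ ≠ 0 := by
    rw [norm_ne_zero_iff]
    exact fun h => hx0 (hT (by rw [h, map_zero]))
  let z : W := ((‖T x‖⁻¹ : ℝ) : ℂ) • x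
  have hz : ‖T z‖ = 1 := by
    simp only [z, map_smul, norm_smul, Complex.norm_real, norm_inv, norm_norm]
    exact inv_mul_cancel₀ hTx
  have h1 := (aux_hasSum_norm (T z)).tendsto_sum_nat
  rw [hz] at h1
  have h2 := h1.eventually_const_lt (show (3 / 4 : ℝ) < 1 by norm_num)
  obtain ⟨M, hM1, hM2⟩ := (h2.and (Filter.eventually_gt_atTop N)).exists
  refine ⟨z, M, hz, ?_, hM2, hM1⟩
  intro m hm
  have := congrFun hx ⟨m, hm⟩
  have h3 : (T x : ∀ _ : ℕ, ℂ) m = 0 := this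
  simp [z, h3]

theorem aux_not_reflexive {W : Type*} [NormedAddCommGroup W] [NormedSpace ℂ W]
    (T : W →L[ℂ] lp (fun _ : ℕ => ℂ) 1) (hT : Function.Injective T)
    (C : ℝ) (hC : 0 < C) (hb : ∀ x, C * ‖x‖ ≤ ‖T x‖)
    (hinf : ¬ FiniteDimensional ℂ W) : ¬ IsReflexiveSpace W := by
  intro hrefl
  choose x M hx1 hx0 hNM hsum using aux_exists T hT hinf
  obtain ⟨N, hNs⟩ : ∃ N : ℕ → ℕ, ∀ n, N (n + 1) = M (N n) :=
    ⟨fun n => Nat.rec 0 (fun _ k => M k) n, fun n => rfl⟩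
  have hN : StrictMono N := strictMono_nat_of_lt_succ fun n => by rw [hNs]; exact hNM _
  let w : ℕ → W := fun n => x (N n)
  -- the sign sequence
  have hg : ∀ m, ∃ c : ℂ, ‖c‖ ≤ 1 ∧ ∀ n, N n ≤ m → m < N (n + 1) →
      c * (T (w n) : ∀ _ : ℕ, ℂ) m = (‖(T (w n) : ∀ _ : ℕ, ℂ) m‖ : ℂ) := by
    intro m
    by_cases h : ∃ n, N n ≤ m ∧ m < N (n + 1)
    · obtain ⟨n, hn1, hn2⟩ := h
      set y := (T (w n) : ∀ _ : ℕ, ℂ) m with hy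
      refine ⟨(starRingEnd ℂ) y / (‖y‖ : ℂ), ?_, ?_⟩
      · rw [norm_div, RCLike.norm_conj, Complex.norm_real, norm_norm]
        exact div_self_le_one _
      · intro n' h1 h2
        have hnn : n' = n := by
          have a1 := hN.lt_iff_lt.1 (lt_of_le_of_lt h1 hn2)
          have a2 := hN.lt_iff_lt.1 (lt_of_le_of_lt hn1 h2)
          omega
        subst hnn
        rw [← hy]
        by_cases hy0 : y = 0
        · simp [hy0]
        · have : (‖y‖ : ℂ) ≠ 0 := by simpa using hy0
          rw [div_mul_eq_mul_div, Complex.conj_mul', div_eq_iff this, sq]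
    · exact ⟨0, by simp, fun n h1 h2 => absurd ⟨n, h1, h2⟩ h⟩
  choose g hg1 hg2 using hg
  obtain ⟨φ, hφ⟩ := aux_functional g hg1
  have hlow : ∀ n, 1 / 2 ≤ (φ (T (w n))).re := by
    intro n
    have s1 := Complex.hasSum_re (hφ (T (w n)))
    have s2 := aux_hasSum_norm (T (w n))
    rw [hx1] at s2
    have s3 : HasSum (fun m => if m ∈ Finset.range (N (n + 1)) then
        ‖(T (w n) : ∀ _ : ℕ, ℂ) m‖ else 0)
        (∑ m ∈ Finset.range (N (n + 1)), if m ∈ Finset.range (N (n + 1)) then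
        ‖(T (w n) : ∀ _ : ℕ, ℂ) m‖ else 0) :=
      hasSum_sum_of_ne_finset_zero (fun m hm => if_neg hm)
    rw [Finset.sum_congr rfl (fun m hm => if_pos hm)] at s3
    have hs := hsum (N n)
    rw [← hNs] at hs
    have := hasSum_le (fun m => ?_) ((s3.mul_left 2).sub s2) s1
    · change 3 / 4 < ∑ m ∈ Finset.range (N (n + 1)), ‖(T (w n) : ∀ _ : ℕ, ℂ) m‖ at hs
      linarith
    · by_cases hm : m ∈ Finset.range (N (n + 1))
      · rw [if_pos hm]
        by_cases hm2 : N n ≤ m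
        · rw [hg2 m n hm2 (Finset.mem_range.1 hm), Complex.ofReal_re]
          linarith
        · have : (T (w n) : ∀ _ : ℕ, ℂ) m = 0 := hx0 _ m (not_le.1 hm2)
          simp [this]
      · rw [if_neg hm]
        have h1 := Complex.abs_re_le_norm (g m * (T (w n) : ∀ _ : ℕ, ℂ) m)
        have h2 : ‖g m * (T (w n) : ∀ _ : ℕ, ℂ) m‖ ≤ ‖(T (w n) : ∀ _ : ℕ, ℂ) m‖ := by
          rw [norm_mul]
          exact mul_le_of_le_one_left (norm_nonneg _) (hg1 m)
        have h3 := neg_abs_le (g m * (T (w n) : ∀ _ : ℕ, ℂ) m).re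
        linarith
  -- weak-star limit
  have hK := WeakDual.isCompact_closedBall (𝕜 := ℂ) (E := StrongDual ℂ W) 0 (1 / C)
  let J : ℕ → WeakDual ℂ (StrongDual ℂ W) :=
    fun n => StrongDual.toWeakDual (inclusionInDoubleDual ℂ W (w n))
  have hJ : ∀ n, J n ∈ WeakDual.toStrongDual ⁻¹' Metric.closedBall
      (0 : StrongDual ℂ (StrongDual ℂ W)) (1 / C) := by
    intro n
    have h1 : ‖w n‖ ≤ 1 / C := by
      rw [le_div_iff₀' hC]
      exact (hb _).trans (hx1 _).le
    refine (mem_closedBall_zero_iff (E := StrongDual ℂ (StrongDual ℂ W))).2 ?_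
    exact (double_dual_bound ℂ W (w n)).trans h1
  obtain ⟨Φ, -, hΦ⟩ := hK.ultrafilter_le_nhds' ((Filter.hyperfilter ℕ).map J)
    (Filter.mem_map.2 (Filter.Eventually.of_forall hJ))
  have hlim : ∀ ψ : StrongDual ℂ W, Filter.Tendsto (fun n => ψ (w n))
      (Filter.hyperfilter ℕ : Filter ℕ) (nhds (Φ ψ)) := by
    intro ψ
    have h1 : Filter.Tendsto J (Filter.hyperfilter ℕ : Filter ℕ) (nhds Φ) := hΦ
    exact ((WeakDual.eval_continuous ψ).tendsto Φ).comp h1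
  obtain ⟨v, hv⟩ := hrefl (WeakDual.toStrongDual Φ)
  have hv' : ∀ ψ : StrongDual ℂ W, Φ ψ = ψ v := by
    intro ψ
    have := DFunLike.congr_fun hv ψ
    exact this.symm
  have hle : (Filter.hyperfilter ℕ : Filter ℕ) ≤ Filter.atTop := Nat.hyperfilter_le_atTop
  have hTv : T v = 0 := by
    ext m
    obtain ⟨e, he⟩ := aux_functional (fun k => if k = m then 1 else 0)
      (fun k => by split_ifs <;> simp)
    have he' : ∀ y : lp (fun _ : ℕ => ℂ) 1, e y = (y : ∀ _ : ℕ, ℂ) m := by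
      intro y
      refine (he y).unique ?_
      convert hasSum_single (f := fun k => (if k = m then (1 : ℂ) else 0) *
        (y : ∀ _ : ℕ, ℂ) k) m ?_ using 1
      · simp
      · intro k hk
        simp [hk]
    have h1 := hlim (e.comp T)
    rw [hv'] at h1
    have h2 : Filter.Tendsto (fun n => (e.comp T) (w n)) (Filter.hyperfilter ℕ : Filter ℕ)
        (nhds 0) := by
      refine (tendsto_const_nhds.congr' ?_)
      refine hle ?_
      filter_upwards [Filter.eventually_gt_atTop m] with n hn
      rw [ContinuousLinearMap.comp_apply, he']
      exact (hx0 _ m (lt_of_lt_of_le hn (hN.le_apply))).symm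
    have := tendsto_nhds_unique h1 h2
    rw [ContinuousLinearMap.comp_apply, he'] at this
    simpa using this
  have h1 := hlim (φ.comp T)
  rw [hv', ContinuousLinearMap.comp_apply, hTv, map_zero] at h1
  have h2 := ge_of_tendsto ((Complex.continuous_re.tendsto 0).comp h1)
    (Filter.Eventually.of_forall hlow)
  norm_num at h2

/-- If the `L¹` norm on a subspace `X ⊆ L¹(μ)` is controlled by the sums
`Σ_m |∫_{E_m} f|` over a countable measurable partition `(E_m)`, then
`f ↦ (∫_{E_m} f)_m` is an isomorphism of `X` onto a subspace of `ℓ¹`;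
consequently, if `X` is closed and infinite dimensional, it is not reflexive. -/
theorem isomorphism_onto_l1_subspace_of_partition_bound
    {S : Type*} [MeasurableSpace S] (μ : Measure S)
    (X : Subspace ℂ (Lp ℂ 1 μ))
    (E : ℕ → Set S) (hmeas : ∀ m, MeasurableSet (E m))
    (hdisj : Pairwise (Function.onFun Disjoint E)) (hcover : ⋃ m, E m = Set.univ)
    (C : ℝ) (hC : 0 < C)
    (hbound : ∀ f ∈ X, C * ‖f‖ ≤ ∑' m : ℕ, ‖∫ x in E m, (f : Lp ℂ 1 μ) x ∂μ‖) :
    (∃ T : ↥X →L[ℂ] lp (fun _ : ℕ => ℂ) 1,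
      (∀ (f : ↥X) (m : ℕ), (T f : ∀ _ : ℕ, ℂ) m = ∫ x in E m, (f : Lp ℂ 1 μ) x ∂μ) ∧
      Function.Injective T ∧
      (∀ f : ↥X, C * ‖f‖ ≤ ‖T f‖) ∧ (∀ f : ↥X, ‖T f‖ ≤ ‖f‖)) ∧
    (IsClosed (X : Set (Lp ℂ 1 μ)) → ¬ FiniteDimensional ℂ ↥X →
      ¬ IsReflexiveSpace ↥X) := by
  have key : ∃ T : ↥X →L[ℂ] lp (fun _ : ℕ => ℂ) 1,
      (∀ (f : ↥X) (m : ℕ), (T f : ∀ _ : ℕ, ℂ) m = ∫ x in E m, (f : Lp ℂ 1 μ) x ∂μ) ∧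
      Function.Injective T ∧
      (∀ f : ↥X, C * ‖f‖ ≤ ‖T f‖) ∧ (∀ f : ↥X, ‖T f‖ ≤ ‖f‖) := by
    have hint : ∀ f : Lp ℂ 1 μ, Integrable f μ := fun f => L1.integrable_coeFn f
    have hS : ∀ f : Lp ℂ 1 μ, HasSum (fun m => ∫ x in E m, ‖f x‖ ∂μ) ‖f‖ := by
      intro f
      have := hasSum_integral_iUnion hmeas hdisj (hint f).norm.integrableOn
      rwa [hcover, Measure.restrict_univ, ← L1.norm_eq_integral_norm] at this
    have hle : ∀ (f : Lp ℂ 1 μ) m, ‖∫ x in E m, f x ∂μ‖ ≤ ∫ x in E m, ‖f x‖ ∂μ :=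
      fun f m => norm_integral_le_integral_norm _
    have hmem : ∀ f : Lp ℂ 1 μ, Memℓp (fun m => ∫ x in E m, f x ∂μ) 1 := by
      intro f
      refine memℓp_gen ?_
      simpa using Summable.of_nonneg_of_le (fun m => norm_nonneg _) (hle f) (hS f).summable
    let L : ↥X →ₗ[ℂ] lp (fun _ : ℕ => ℂ) 1 :=
      { toFun := fun f => ⟨fun m => ∫ x in E m, (f : Lp ℂ 1 μ) x ∂μ, hmem f⟩
        map_add' := by
          intro f g
          ext m
          change ∫ x in E m, ((f + g : Lp ℂ 1 μ)) x ∂μ =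
            ∫ x in E m, (f : Lp ℂ 1 μ) x ∂μ + ∫ x in E m, (g : Lp ℂ 1 μ) x ∂μ
          rw [← integral_add (hint _).integrableOn (hint _).integrableOn]
          exact integral_congr_ae (ae_restrict_of_ae (Lp.coeFn_add _ _))
        map_smul' := by
          intro c f
          ext m
          change ∫ x in E m, ((c • (f : Lp ℂ 1 μ) : Lp ℂ 1 μ)) x ∂μ =
            c • ∫ x in E m, (f : Lp ℂ 1 μ) x ∂μ
          rw [← integral_smul]
          exact integral_congr_ae (ae_restrict_of_ae (Lp.coeFn_smul _ _)) }
    have hL : ∀ (f : ↥X) m, (L f : ∀ _ : ℕ, ℂ) m = ∫ x in E m, (f : Lp ℂ 1 μ) x ∂μ :=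
      fun f m => rfl
    have hup : ∀ f : ↥X, ‖L f‖ ≤ ‖f‖ := fun f =>
      hasSum_le (fun m => hle f m) (aux_hasSum_norm (L f)) (hS f)
    have hlow : ∀ f : ↥X, C * ‖f‖ ≤ ‖L f‖ := by
      intro f
      rw [← (aux_hasSum_norm (L f)).tsum_eq]
      exact hbound f f.2
    refine ⟨L.mkContinuous 1 (fun f => by rw [one_mul]; exact hup f), hL, ?_, hlow, hup⟩
    rw [injective_iff_map_eq_zero]
    intro f hf
    have h1 := hlow f
    have hf' : L f = 0 := hf
    rw [hf', norm_zero] at h1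
    exact norm_le_zero_iff.1 (nonpos_of_mul_nonpos_right h1 hC)
  refine ⟨key, fun _ hinf => ?_⟩
  obtain ⟨T, -, hinj, hlow, -⟩ := key
  exact aux_not_reflexive T hinj C hC hlow hinf
end
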